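/- There exist universal constants c₀, c₁ ∈ (0,1] and c₂ ≥ 1 with the following property. Let u be an integer with u ≥ 2, let r, r₁ be nonnegative reals with r₁ = α²·r for some α ≥ 1 and r₁ ≤ u, let 0 < δ ≤ 1, and let γ satisfy 0 < γ < 1/4 and γ ≤ c₀/(2α). Set k = ln(u)·γ^{−2} and N = 2·c₁^{−2}·k·ln(k/δ)·exp(8·c₂·γ²·r₁). Let H be a random hypothesis set consisting of the fixed hypothesis h₀ together with k·⌈N/k⌉ independent uniformly random vectors in {−1,1}^u. Then with probability at least 1 − δ over H, for every probability distribution D on {1,…,u} there exists h ∈ H such that ∑_{i=1}^u D(i)·h(i) ≥ γ/4. -/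

import Mathlib

open MeasureTheory

/-- The sign `±1` associated with a Boolean (`true ↦ 1`, `false ↦ -1`). -/
noncomputable def boolSign (b : Bool) : ℝ := if b then 1 else -1

noncomputable def EE (n : ℕ) (f : (Fin n → Bool) → ℝ) : ℝ := (∑ b, f b) / 2 ^ n

lemma sum_cons {G : Type*} [Fintype G] (n : ℕ) (f : (Fin (n+1) → G) → ℝ) :
    ∑ b, f b = ∑ x : G, ∑ b : Fin n → G, f (Fin.cons x b) := by
  rw [← Fintype.sum_prod_type' (f := fun (x : G) (b : Fin n → G) => f (Fin.cons x b))]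
  exact (Equiv.sum_comp (Fin.consEquiv (fun _ : Fin (n+1) => G)) f).symm

lemma EE_succ (n : ℕ) (f : (Fin (n+1) → Bool) → ℝ) :
    EE (n+1) f = EE n (fun b => (f (Fin.cons true b) + f (Fin.cons false b)) / 2) := by
  unfold EE
  rw [sum_cons, Fintype.sum_bool, ← Finset.sum_div, Finset.sum_add_distrib, pow_succ]
  field_simp

lemma EE_add (n : ℕ) (f g : (Fin n → Bool) → ℝ) :
    EE n (fun b => f b + g b) = EE n f + EE n g := by
  unfold EE; rw [Finset.sum_add_distrib, add_div]

lemma EE_smul (n : ℕ) (c : ℝ) (f : (Fin n → Bool) → ℝ) :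
    EE n (fun b => c * f b) = c * EE n f := by
  unfold EE; rw [← Finset.mul_sum, mul_div_assoc]

lemma EE_mono (n : ℕ) (f g : (Fin n → Bool) → ℝ) (h : ∀ b, f b ≤ g b) : EE n f ≤ EE n g := by
  unfold EE; gcongr; exact h _

lemma EE_const (n : ℕ) (c : ℝ) : EE n (fun _ => c) = c := by
  unfold EE; simp

lemma EE_nonneg (n : ℕ) (f : (Fin n → Bool) → ℝ) (h : ∀ b, 0 ≤ f b) : 0 ≤ EE n f := by
  unfold EE; exact div_nonneg (Finset.sum_nonneg fun _ _ => h _) (by positivity)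

lemma EE_cs (n : ℕ) (r f g : (Fin n → Bool) → ℝ) (hf : ∀ b, 0 ≤ f b) (hg : ∀ b, 0 ≤ g b)
    (h : ∀ b, r b ^ 2 = f b * g b) : EE n r ^ 2 ≤ EE n f * EE n g := by
  unfold EE
  rw [div_pow, div_mul_div_comm, sq (2 ^ n : ℝ)]
  gcongr
  exact Finset.sum_sq_le_sum_mul_sum_of_sq_le_mul _ (fun i _ => hf i) (fun i _ => hg i)
    (fun i _ => (h i).le)

noncomputable def XX {n : ℕ} (D : Fin n → ℝ) (b : Fin n → Bool) : ℝ := ∑ i, D i * boolSign (b i)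
noncomputable def WW {n : ℕ} (τ : Fin n → ℝ) (b : Fin n → Bool) : ℝ :=
  ∏ i, (1 + τ i * boolSign (b i))

lemma XX_cons {n : ℕ} (D : Fin (n+1) → ℝ) (x : Bool) (b : Fin n → Bool) :
    XX D (Fin.cons x b) = D 0 * boolSign x + XX (fun i => D i.succ) b := by
  unfold XX; rw [Fin.sum_univ_succ]; simp

lemma WW_cons {n : ℕ} (D : Fin (n+1) → ℝ) (x : Bool) (b : Fin n → Bool) :
    WW D (Fin.cons x b) = (1 + D 0 * boolSign x) * WW (fun i => D i.succ) b := by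
  unfold WW; rw [Fin.prod_univ_succ]; simp

lemma EW (n : ℕ) (τ : Fin n → ℝ) : EE n (WW τ) = 1 := by
  induction n with
  | zero => simp [EE, WW]
  | succ n ih =>
    rw [EE_succ]
    simp only [WW_cons]
    refine Eq.trans ?_ (ih (fun i => τ i.succ))
    congr 1; ext b; simp [boolSign]; ring

lemma EWX (n : ℕ) (τ D : Fin n → ℝ) : EE n (fun b => WW τ b * XX D b) = ∑ i, τ i * D i := by
  induction n with
  | zero => simp [EE, XX]
  | succ n ih =>
    rw [EE_succ, Fin.sum_univ_succ, ← ih (fun i => τ i.succ) (fun i => D i.succ)]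
    simp only [WW_cons, XX_cons]
    have h := EW n (fun i => τ i.succ)
    have h' : τ 0 * D 0 = EE n (fun b => τ 0 * D 0 * WW (fun i => τ i.succ) b) := by
      rw [EE_smul, h, mul_one]
    rw [h', ← EE_add]
    congr 1; ext b; simp [boolSign]; ring

lemma EWX2 (n : ℕ) (τ D : Fin n → ℝ) : EE n (fun b => WW τ b * XX D b ^ 2) =
    (∑ i, τ i * D i) ^ 2 + ∑ i, (1 - τ i ^ 2) * D i ^ 2 := by
  induction n with
  | zero => simp [EE, XX]
  | succ n ih =>
    rw [EE_succ, Fin.sum_univ_succ, Fin.sum_univ_succ]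
    simp only [WW_cons, XX_cons]
    have h := EW n (fun i => τ i.succ)
    have h1 := EWX n (fun i => τ i.succ) (fun i => D i.succ)
    have h2 := ih (fun i => τ i.succ) (fun i => D i.succ)
    have : EE n (fun b => D 0 ^ 2 * WW (fun i => τ i.succ) b +
        (2 * τ 0 * D 0 * (WW (fun i => τ i.succ) b * XX (fun i => D i.succ) b) +
        WW (fun i => τ i.succ) b * XX (fun i => D i.succ) b ^ 2)) = D 0 ^ 2 * 1 +
        (2 * τ 0 * D 0 * (∑ i : Fin n, τ i.succ * D i.succ) + 
         ((∑ i : Fin n, τ i.succ * D i.succ) ^ 2 +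
            ∑ i : Fin n, (1 - τ i.succ ^ 2) * D i.succ ^ 2)) := by
      rw [EE_add, EE_add, EE_smul, EE_smul, h, h1, h2]
    trans
    · trans
      swap
      · exact this
      · congr 1; ext b; simp [boolSign]; ring
    · ring

lemma EW2 (n : ℕ) (τ : Fin n → ℝ) : EE n (fun b => WW τ b ^ 2) = ∏ i, (1 + τ i ^ 2) := by
  induction n with
  | zero => simp [EE, WW]
  | succ n ih =>
    rw [EE_succ, Fin.prod_univ_succ, ← ih, ← EE_smul]
    simp only [WW_cons]
    congr 1; ext b; simp [boolSign]; ring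

lemma EX2 (n : ℕ) (D : Fin n → ℝ) : EE n (fun b => XX D b ^ 2) = ∑ i, D i ^ 2 := by
  have := EWX2 n (fun _ => 0) D
  simpa [WW] using this

lemma EX4 (n : ℕ) (D : Fin n → ℝ) : EE n (fun b => XX D b ^ 4) ≤ 3 * (∑ i, D i ^ 2) ^ 2 := by
  induction n with
  | zero => simp [EE, XX]
  | succ n ih =>
    rw [EE_succ, Fin.sum_univ_succ]
    simp only [XX_cons]
    have h1 := EX2 n (fun i => D i.succ)
    have h2 := ih (fun i => D i.succ)
    have : EE n (fun b => D 0 ^ 4 + (6 * D 0 ^ 2 * XX (fun i => D i.succ) b ^ 2 +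
        XX (fun i => D i.succ) b ^ 4)) ≤ D 0 ^ 4 + (6 * D 0 ^ 2 * (∑ i : Fin n, D i.succ ^ 2) +
         3 * (∑ i : Fin n, D i.succ ^ 2) ^ 2) := by
      rw [EE_add, EE_add, EE_smul, EE_const, h1]; linarith
    trans
    · trans
      swap
      · exact this
      · apply le_of_eq; congr 1; ext b; simp [boolSign]; ring
    · nlinarith [sq_nonneg (D 0 ^ 2)]

lemma EE_neg (n : ℕ) (f : (Fin n → Bool) → ℝ) : EE n (fun b => f (fun i => !(b i))) = EE n f := by
  unfold EE
  congr 1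
  exact Equiv.sum_comp (Equiv.piCongrRight fun _ : Fin n => Equiv.boolNot) f

lemma XX_neg {n : ℕ} (D : Fin n → ℝ) (b : Fin n → Bool) : XX D (fun i => !(b i)) = - XX D b := by
  unfold XX; rw [← Finset.sum_neg_distrib]; congr 1; ext i; cases h : b i <;> simp [boolSign, h]

open scoped Classical in
lemma case1 (n : ℕ) (D : Fin n → ℝ) (θ : ℝ) (hθ : 0 < θ) (h : 4 * θ ^ 2 ≤ ∑ i, D i ^ 2) :
    3 / 32 ≤ EE n (fun b => if θ ≤ XX D b then 1 else 0) := by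
  set A := ∑ i, D i ^ 2 with hA
  set P := EE n (fun b => if θ ≤ XX D b then 1 else 0) with hP
  have hneg : EE n (fun b => if θ ≤ - XX D b then 1 else 0) = P := by
    rw [hP, ← EE_neg n (fun b => if θ ≤ XX D b then 1 else 0)]
    simp only [XX_neg]
  have h2 : EE n (fun b => if θ ≤ |XX D b| then 1 else 0) ≤ 2 * P := by
    have : 2 * P = P + EE n (fun b => if θ ≤ - XX D b then 1 else 0) := by rw [hneg]; ring
    rw [this, hP, ← EE_add]
    apply EE_mono
    intro b
    by_cases h : θ ≤ |XX D b|
    · rcases le_abs.1 h with h1 | h1 <;> simp [h, h1] <;> split_ifs <;> norm_num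
    · rw [if_neg h]; split_ifs <;> norm_num
  set Q := EE n (fun b => if θ ≤ |XX D b| then 1 else 0)
  have hcs := EE_cs n (fun b => XX D b ^ 2 * if θ ≤ |XX D b| then 1 else 0) (fun b => XX D b ^ 4)
    (fun b => if θ ≤ |XX D b| then 1 else 0) (fun b => by positivity)
    (fun b => by split_ifs <;> norm_num) (fun b => by split_ifs <;> ring)
  have h3 : A ≤ θ ^ 2 + EE n (fun b => XX D b ^ 2 * if θ ≤ |XX D b| then 1 else 0) := by
    have h' : θ ^ 2 = EE n (fun _ => θ ^ 2) := (EE_const n (θ ^ 2)).symm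
    rw [hA, ← EX2 n D, h', ← EE_add]
    apply EE_mono
    intro b
    by_cases h : θ ≤ |XX D b|
    · rw [if_pos h]; nlinarith
    · rw [if_neg h, mul_zero, add_zero]
      rw [← sq_abs (XX D b)]
      push Not at h
      gcongr
  have h4 := EX4 n D
  rw [← hA] at h4
  have hQ : 0 ≤ Q := EE_nonneg _ _ fun b => by split_ifs <;> norm_num
  have hA0 : 0 < A := by nlinarith [sq_pos_of_pos hθ]
  have h5 : (3 / 4 * A) ^ 2 ≤ 3 * A ^ 2 * Q := by
    refine le_trans ?_ (hcs.trans (mul_le_mul_of_nonneg_right h4 hQ))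
    apply pow_le_pow_left₀ (by positivity)
    linarith
  have h6 : (9 / 16) * A ^ 2 ≤ 3 * Q * A ^ 2 := by nlinarith
  have h7 := le_of_mul_le_mul_right h6 (by positivity)
  linarith

open scoped Classical in
lemma case2 (n : ℕ) (D : Fin n → ℝ) (hD : ∀ i, 0 ≤ D i) (hD1 : ∑ i, D i = 1)
    (S : Finset (Fin n)) (γ : ℝ) (hγ : 0 < γ) (hγ1 : γ ≤ 1 / 16)
    (hS : 1 / 4 ≤ ∑ i ∈ S, D i) (h : ∑ i, D i ^ 2 ≤ 16 * γ ^ 2) :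
    1 / 4624 ≤ EE n (fun b => if 2 * γ ≤ XX D b then 1 else 0) * 
      Real.exp (256 * γ ^ 2 * S.card) := by
  set τ : Fin n → ℝ := fun i => if i ∈ S then 16 * γ else 0 with hτ
  have hτD : ∑ i, τ i * D i = 16 * γ * ∑ i ∈ S, D i := by
    simp [hτ, Finset.mul_sum, Finset.sum_ite_mem]
  have hS1 : ∑ i ∈ S, D i ≤ 1 := by
    rw [← hD1]; exact Finset.sum_le_univ_sum_of_nonneg hD
  have hτ0 : ∀ i, 0 ≤ τ i ∧ τ i ≤ 1 := by
    intro i; simp only [hτ]; split_ifs <;> constructor <;> linarith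
  have hW : ∀ b, 0 ≤ WW τ b := by
    intro b
    apply Finset.prod_nonneg
    intro i _
    have := hτ0 i
    cases b i <;> simp [boolSign] <;> linarith
  have h1 := EWX n τ D
  have h2 : EE n (fun b => WW τ b * XX D b ^ 2) ≤ 272 * γ ^ 2 := by
    rw [EWX2, hτD]
    have : ∑ i, (1 - τ i ^ 2) * D i ^ 2 ≤ ∑ i, D i ^ 2 := by
      apply Finset.sum_le_sum; intro i _
      nlinarith [sq_nonneg (τ i * D i)]
    have h' : (16 * γ * ∑ i ∈ S, D i) ^ 2 ≤ (16 * γ * 1) ^ 2 := by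
      apply pow_le_pow_left₀
      · have : 0 ≤ ∑ i ∈ S, D i := by linarith
        positivity
      · gcongr
    nlinarith
  have h3 : EE n (fun b => WW τ b ^ 2) ≤ Real.exp (256 * γ ^ 2 * S.card) := by
    rw [EW2]
    calc ∏ i, (1 + τ i ^ 2) ≤ ∏ i, Real.exp (τ i ^ 2) := by
          apply Finset.prod_le_prod
          · intro i _; positivity
          · intro i _; linarith [Real.add_one_le_exp (τ i ^ 2)]
      _ = Real.exp (256 * γ ^ 2 * S.card) := by
          rw [← Real.exp_sum]
          congr 1
          simp [hτ, ite_pow, Finset.sum_ite_mem]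
          ring
  set P := EE n (fun b => if 2 * γ ≤ XX D b then 1 else 0) with hP
  set V := EE n (fun b => WW τ b * if 2 * γ ≤ XX D b then 1 else 0) with hV
  have hI : ∀ b, (0:ℝ) ≤ if 2 * γ ≤ XX D b then 1 else 0 := fun b => by split_ifs <;> norm_num
  have hP0 : 0 ≤ P := EE_nonneg _ _ hI
  have hV0 : 0 ≤ V := EE_nonneg _ _ fun b => mul_nonneg (hW b) (hI b)
  have c1 : V ^ 2 ≤ EE n (fun b => WW τ b ^ 2) * P := by
    apply EE_cs _ _ _ _ (fun b => by positivity) hI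
    intro b; split_ifs <;> ring
  have c2 := EE_cs n (fun b => WW τ b * XX D b * if 2 * γ ≤ XX D b then 1 else 0)
    (fun b => WW τ b * XX D b ^ 2) (fun b => WW τ b * if 2 * γ ≤ XX D b then 1 else 0)
    (fun b => mul_nonneg (hW b) (sq_nonneg _)) (fun b => mul_nonneg (hW b) (hI b))
    (fun b => by split_ifs <;> ring)
  rw [← hV] at c2
  have h4 : ∑ i, τ i * D i ≤ 2 * γ + 
      EE n (fun b => WW τ b * XX D b * if 2 * γ ≤ XX D b then 1 else 0) := by
    rw [← h1]
    have : 2 * γ = EE n (fun b => 2 * γ * WW τ b) := by rw [EE_smul, EW, mul_one]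
    rw [this, ← EE_add]
    rw [← this]
    apply EE_mono
    intro b
    have := hW b
    by_cases h : 2 * γ ≤ XX D b
    · rw [if_pos h]; nlinarith
    · rw [if_neg h]; push Not at h; nlinarith
  have h5 : (2 * γ) ^ 2 ≤ 272 * γ ^ 2 * V := by
    refine le_trans ?_ (c2.trans (mul_le_mul_of_nonneg_right h2 hV0))
    apply pow_le_pow_left₀ (by positivity)
    rw [hτD] at h4
    nlinarith
  have h6 : 1 / 68 * γ ^ 2 ≤ V * γ ^ 2 := by nlinarith
  have h7 := le_of_mul_le_mul_right h6 (by positivity)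
  calc (1:ℝ) / 4624 = (1 / 68) ^ 2 := by norm_num
    _ ≤ V ^ 2 := by gcongr
    _ ≤ _ := c1
    _ ≤ Real.exp (256 * γ ^ 2 * S.card) * P := by gcongr
    _ = _ := by ring

open scoped Classical in
lemma weak (n : ℕ) (D : Fin n → ℝ) (hD : ∀ i, 0 ≤ D i) (hD1 : ∑ i, D i = 1)
    (S : Finset (Fin n)) (γ : ℝ) (hγ : 0 < γ) (hγ1 : γ ≤ 1 / 16)
    (hS : 1 / 4 ≤ ∑ i ∈ S, D i) :
    1 / 4624 ≤ EE n (fun b => if 2 * γ ≤ XX D b then 1 else 0) * 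
      Real.exp (256 * γ ^ 2 * S.card) := by
  by_cases h : ∑ i, D i ^ 2 ≤ 16 * γ ^ 2
  · exact case2 n D hD hD1 S γ hγ hγ1 hS h
  · have := case1 n D (2 * γ) (by linarith) (by linarith)
    have h1 : 1 ≤ Real.exp (256 * γ ^ 2 * S.card) := Real.one_le_exp (by positivity)
    nlinarith

open scoped Classical in
lemma adapt {u : ℕ} {G : Type*} [Fintype G] (mem : G → Set (Fin u → ℝ)) (η ρ q : ℝ)
    (hq : 0 ≤ q) (hρ : 0 ≤ ρ)
    (hyp : ∀ w : Fin u → ℝ, (∀ i, 0 < w i) →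
      ∑ x : G, (if ∃ f ∈ mem x, ∑ i, w i * Real.exp (-η * f i) ≤ (∑ i, w i) * ρ then (0:ℝ) else 1)
        ≤ q * Fintype.card G) (n : ℕ) : ∀ (w : Fin u → ℝ), (∀ i, 0 < w i) →
      ∑ g : Fin n → G, (if ∃ s : Fin n → (Fin u → ℝ), (∀ j, s j ∈ mem (g j)) ∧
        ∑ i, w i * Real.exp (-η * ∑ j, s j i) ≤ (∑ i, w i) * ρ ^ n then (0:ℝ) else 1)
        ≤ n * q * (Fintype.card G : ℝ) ^ n := by
  induction n with
  | zero => intro w hw; simp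
  | succ n ih =>
    intro w hw
    rw [sum_cons]
    set c : ℝ := (Fintype.card G : ℝ) with hc
    have key : ∀ x : G, ∑ g : Fin n → G, (if ∃ s : Fin (n+1) → (Fin u → ℝ),
        (∀ j, s j ∈ mem ((Fin.cons x g : Fin (n+1) → G) j)) ∧
        ∑ i, w i * Real.exp (-η * ∑ j, s j i) ≤ (∑ i, w i) * ρ ^ (n+1) then (0:ℝ) else 1) ≤
        (if ∃ f ∈ mem x, ∑ i, w i * Real.exp (-η * f i) ≤ (∑ i, w i) * ρ then (0:ℝ) else 1) * c ^ n
        + n * q * c ^ n := by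
      intro x
      by_cases h : ∃ f ∈ mem x, ∑ i, w i * Real.exp (-η * f i) ≤ (∑ i, w i) * ρ
      · rw [if_pos h, zero_mul, zero_add]
        obtain ⟨f, hf, hfw⟩ := h
        refine le_trans ?_ (ih (fun i => w i * Real.exp (-η * f i)) 
          (fun i => mul_pos (hw i) (Real.exp_pos _)))
        apply Finset.sum_le_sum
        intro g _
        split_ifs with h1 h2 h2
        · exact le_rfl
        · norm_num
        · exfalso; apply h1
          obtain ⟨s, hs, hsw⟩ := h2
          refine ⟨Fin.cons f s, ?_, ?_⟩
          · intro j; refine Fin.cases ?_ ?_ j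
            · simpa using hf
            · intro j; simpa using hs j
          · calc _ = ∑ i, w i * Real.exp (-η * f i) * Real.exp (-η * ∑ j, s j i) := by
                  apply Finset.sum_congr rfl; intro i _
                  rw [Fin.sum_univ_succ, mul_assoc, ← Real.exp_add]; simp; ring_nf; simp
              _ ≤ _ := hsw
              _ ≤ (∑ i, w i) * ρ * ρ ^ n := by gcongr
              _ = _ := by ring
        · exact le_rfl
      · rw [if_neg h, one_mul]
        have : ∑ g : Fin n → G, (1:ℝ) = c ^ n := by simp [hc]
        rw [← this]
        have h0 : 0 ≤ n * q * ∑ g : Fin n → G, (1:ℝ) := by positivity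
        refine le_trans ?_ (le_add_of_nonneg_right h0)
        apply Finset.sum_le_sum; intro g _
        split_ifs <;> norm_num
    refine (Finset.sum_le_sum fun x _ => key x).trans ?_
    rw [Finset.sum_add_distrib, ← Finset.sum_mul]
    have h1 := mul_le_mul_of_nonneg_right (hyp w hw) (show 0 ≤ c ^ n by positivity)
    have h2 : ∑ x : G, (n * q * c ^ n) = n * q * c ^ (n+1) := by
      simp [← hc]; ring
    rw [h2]; push_cast
    have : (n + 1) * q * c ^ (n+1) = q * c * c ^ n + n * q * c ^ (n+1) := by ring
    linarith

lemma mwu_step {u : ℕ} (w f : Fin u → ℝ) (hw : ∀ i, 0 < w i) (hf : ∀ i, f i = 1 ∨ f i = -1)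
    (γ : ℝ) (hγ : 0 < γ) (hγ1 : γ ≤ 1 / 16) (h : 2 * γ * ∑ i, w i ≤ ∑ i, w i * f i) :
    ∑ i, w i * Real.exp (-γ * f i) ≤ (∑ i, w i) * Real.exp (-(5 / 4 * γ ^ 2)) := by
  have h1 : ∀ i, w i * Real.exp (-γ * f i) = Real.cosh γ * w i - Real.sinh γ * (w i * f i) := by
    intro i
    rw [Real.cosh_eq, Real.sinh_eq]
    rcases hf i with h | h <;> rw [h] <;> simp <;> ring
  simp only [h1]
  rw [Finset.sum_sub_distrib, ← Finset.mul_sum, ← Finset.mul_sum]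
  set W := ∑ i, w i
  have hW : 0 ≤ W := Finset.sum_nonneg fun i _ => (hw i).le
  have hs : γ ≤ Real.sinh γ := Real.self_le_sinh_iff.2 hγ.le
  have hc : Real.cosh γ ≤ 1 + 3 / 4 * γ ^ 2 := by
    refine (Real.cosh_le_exp_half_sq γ).trans ?_
    have hb : |γ ^ 2 / 2| ≤ 1 := by rw [abs_of_nonneg (by positivity)]; nlinarith
    have := Real.abs_exp_sub_one_sub_id_le hb
    have := (abs_le.1 this).2
    have hg : γ ^ 2 ≤ 1 := by nlinarith
    have : γ ^ 2 * γ ^ 2 ≤ γ ^ 2 * 1 := mul_le_mul_of_nonneg_left hg (sq_nonneg γ)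
    nlinarith
  have he := Real.add_one_le_exp (-(5 / 4 * γ ^ 2))
  have h2 : 2 * γ ^ 2 * W ≤ Real.sinh γ * ∑ i, w i * f i := by
    have h0 : 0 ≤ 2 * γ * W := by positivity
    calc 2 * γ ^ 2 * W = γ * (2 * γ * W) := by ring
      _ ≤ Real.sinh γ * ∑ i, w i * f i := by gcongr
  calc _ ≤ (1 + 3 / 4 * γ ^ 2) * W - 2 * γ ^ 2 * W := by gcongr
    _ = W * (-(5 / 4 * γ ^ 2) + 1) := by ring
    _ ≤ _ := by gcongr

lemma boolSign_or (b : Bool) : boolSign b = 1 ∨ boolSign b = -1 := by cases b <;> simp [boolSign]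

open scoped Classical in
lemma group_fail {u : ℕ} (hu : 0 < u) (L : ℕ) (h0 : Fin u → ℝ) (hh : ∀ i, h0 i = 1 ∨ h0 i = -1)
    (r1 γ : ℝ) (hγ : 0 < γ) (hγ1 : γ ≤ 1 / 16)
    (hS : ((Finset.univ.filter fun i => h0 i = -1).card : ℝ) ≤ r1 + 1)
    (w : Fin u → ℝ) (hw : ∀ i, 0 < w i) :
    ∑ x : Fin L → Fin u → Bool, (if ∃ f ∈ insert h0 {f | ∃ t : Fin L, f = fun i => boolSign (x t i)},
      ∑ i, w i * Real.exp (-γ * f i) ≤ (∑ i, w i) * Real.exp (-(5 / 4 * γ ^ 2)) then (0:ℝ) else 1)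
    ≤ Real.exp (-(Real.exp (-(256 * γ ^ 2 * r1)) / 40000 * L)) *
      Fintype.card (Fin L → Fin u → Bool) := by
  by_cases hc : 2 * γ * ∑ i, w i ≤ ∑ i, w i * h0 i
  · have : ∀ x : Fin L → Fin u → Bool, 
      ∃ f ∈ insert h0 {f | ∃ t : Fin L, f = fun i => boolSign (x t i)},
        ∑ i, w i * Real.exp (-γ * f i) ≤ (∑ i, w i) * Real.exp (-(5 / 4 * γ ^ 2)) := by
      intro x
      exact ⟨h0, Set.mem_insert _ _, mwu_step w h0 hw hh γ hγ hγ1 hc⟩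
    simp only [this, if_true, Finset.sum_const_zero]
    positivity
  set W := ∑ i, w i with hWd
  have hW : 0 < W := by
    haveI : Nonempty (Fin u) := ⟨⟨0, hu⟩⟩
    exact Finset.sum_pos (fun i _ => hw i) Finset.univ_nonempty
  set D : Fin u → ℝ := fun i => w i / W with hD
  have hD0 : ∀ i, 0 ≤ D i := fun i => div_nonneg (hw i).le hW.le
  have hD1 : ∑ i, D i = 1 := by
    simp only [hD]; rw [← Finset.sum_div]; exact div_self hW.ne'
  set S := Finset.univ.filter fun i => h0 i = -1 with hSd
  have hDS : 1 / 4 ≤ ∑ i ∈ S, D i := by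
    have e1 : ∑ i, D i * h0 i = 1 - 2 * ∑ i ∈ S, D i := by
      rw [← hD1, hSd, Finset.sum_filter, Finset.mul_sum, ← Finset.sum_sub_distrib]
      apply Finset.sum_congr rfl; intro i _
      rcases hh i with h | h <;> rw [h] <;> norm_num
      ring
    have e2 : ∑ i, D i * h0 i = (∑ i, w i * h0 i) / W := by
      rw [Finset.sum_div]; apply Finset.sum_congr rfl; intro i _; simp only [hD]; ring
    push Not at hc
    have e3 : (∑ i, w i * h0 i) / W < 2 * γ := by rwa [div_lt_iff₀ hW]
    linarith
  have hweak := weak u D hD0 hD1 S γ hγ hγ1 hDS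
  set P := EE u (fun b => if 2 * γ ≤ XX D b then 1 else 0) with hP
  have hP0 : 0 ≤ P := EE_nonneg _ _ fun b => by split_ifs <;> norm_num
  have hp : Real.exp (-(256 * γ ^ 2 * r1)) / 40000 ≤ P := by
    have g1 : 256 * γ ^ 2 ≤ 1 := by nlinarith
    have g2 : Real.exp (256 * γ ^ 2 * S.card) ≤ Real.exp (256 * γ ^ 2 * r1) * 2.7182818286 := by
      refine le_trans ?_ (mul_le_mul_of_nonneg_left Real.exp_one_lt_d9.le (Real.exp_pos _).le)
      rw [← Real.exp_add]
      apply Real.exp_le_exp.2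
      have := mul_le_mul_of_nonneg_left hS (show 0 ≤ 256 * γ ^ 2 by positivity)
      linarith
    have g3 : 1 / 4624 ≤ P * (Real.exp (256 * γ ^ 2 * r1) * 2.7182818286) := 
      hweak.trans (by gcongr)
    rw [Real.exp_neg, div_le_iff₀ (by norm_num), inv_le_iff_one_le_mul₀ (Real.exp_pos _)]
    nlinarith [mul_nonneg hP0 (Real.exp_pos (256 * γ ^ 2 * r1)).le]
  set φ : (Fin u → Bool) → ℝ := fun b => 1 - if 2 * γ ≤ XX D b then 1 else 0 with hφ
  have hφ0 : ∀ b, 0 ≤ φ b := by intro b; simp only [hφ]; split_ifs <;> norm_num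
  calc _ ≤ ∑ x : Fin L → Fin u → Bool, ∏ l, φ (x l) := by
        apply Finset.sum_le_sum
        intro x _
        split_ifs with h
        · exact Finset.prod_nonneg fun l _ => hφ0 _
        · apply le_of_eq; symm
          apply Finset.prod_eq_one
          intro l _
          simp only [hφ]
          rw [if_neg, sub_zero]
          intro hl
          apply h
          refine ⟨fun i => boolSign (x l i), Set.mem_insert_of_mem _ ⟨l, rfl⟩, ?_⟩
          apply mwu_step w _ hw (fun i => boolSign_or _) γ hγ hγ1
          have : XX D (x l) = (∑ i, w i * boolSign (x l i)) / W := by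
            unfold XX
            rw [Finset.sum_div]; apply Finset.sum_congr rfl; intro i _; simp only [hD]; ring
          rw [this, le_div_iff₀ hW] at hl
          exact hl
    _ = (∑ b, φ b) ^ L := by
        have := Finset.prod_univ_sum (fun _ : Fin L => (Finset.univ : Finset (Fin u → Bool)))
          (fun _ b => φ b)
        rw [Fintype.piFinset_univ] at this
        rw [← this]; simp
    _ = ((1 - P) * 2 ^ u) ^ L := by
        congr 1
        have : ∑ b, φ b = 2 ^ u - ∑ b, (if 2 * γ ≤ XX D b then (1:ℝ) else 0) := by
          simp only [hφ]; rw [Finset.sum_sub_distrib]; simp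
        rw [this, hP]; unfold EE; field_simp
    _ ≤ (Real.exp (-(Real.exp (-(256 * γ ^ 2 * r1)) / 40000)) * 2 ^ u) ^ L := by
        have hP1 : P ≤ 1 := by
          rw [← EE_const u 1]; apply EE_mono; intro b; split_ifs <;> norm_num
        apply pow_le_pow_left₀
        · have : 0 ≤ 1 - P := by linarith
          positivity
        · gcongr
          have := Real.add_one_le_exp (-(Real.exp (-(256 * γ ^ 2 * r1)) / 40000))
          linarith [Real.one_sub_le_exp_neg (Real.exp (-(256 * γ ^ 2 * r1)) / 40000)]
    _ = _ := by
        rw [mul_pow, ← Real.exp_nat_mul]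
        simp
        ring

open scoped Classical in
lemma final_count (u K L : ℕ) (hu : 2 ≤ u) (h0 : Fin u → ℝ) (hh : ∀ i, h0 i = 1 ∨ h0 i = -1)
    (r1 γ : ℝ) (hγ : 0 < γ) (hγ1 : γ ≤ 1 / 16) (hK : Real.log u ≤ K * γ ^ 2)
    (hS : ((Finset.univ.filter fun i => h0 i = -1).card : ℝ) ≤ r1 + 1) :
    ∑ g : Fin (K * L) → Fin u → Bool, (if ∀ H : Set (Fin u → ℝ),
              H = insert h0 {f | ∃ t : Fin (K * L), f = fun i => boolSign (g t i)} →
              ∀ D : Fin u → ℝ, (∀ i, 0 ≤ D i) → ∑ i, D i = 1 →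
                ∃ f ∈ H, γ / 4 ≤ ∑ i, D i * f i then (0:ℝ) else 1) ≤
      K * Real.exp (-(Real.exp (-(256 * γ ^ 2 * r1)) / 40000 * L)) *
      Fintype.card (Fin (K * L) → Fin u → Bool) := by
  have A := adapt (u := u) (G := Fin L → Fin u → Bool)
    (fun x => insert h0 {f | ∃ t : Fin L, f = fun i => boolSign (x t i)}) γ
    (Real.exp (-(5 / 4 * γ ^ 2))) (Real.exp (-(Real.exp (-(256 * γ ^ 2 * r1)) / 40000 * L)))
    (Real.exp_pos _).le (Real.exp_pos _).le
    (fun w hw => group_fail (by omega) L h0 hh r1 γ hγ hγ1 hS w hw) K (fun _ => 1) (by simp)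
  have hcard : (Fintype.card (Fin (K * L) → Fin u → Bool) : ℝ) =
      (Fintype.card (Fin L → Fin u → Bool) : ℝ) ^ K := by
    simp; rw [mul_comm, pow_mul]
  rw [hcard]
  refine le_trans ?_ A
  let e : (Fin K → Fin L → Fin u → Bool) ≃ (Fin (K * L) → Fin u → Bool) :=
    (Equiv.curry (Fin K) (Fin L) (Fin u → Bool)).symm.trans
      (Equiv.arrowCongr finProdFinEquiv (Equiv.refl _))
  rw [← Equiv.sum_comp e]
  apply Finset.sum_le_sum
  intro g _
  split_ifs with h1 h2 h2
  · exact le_rfl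
  · norm_num
  · exfalso; apply h1
    obtain ⟨s, hs, hsw⟩ := h2
    rintro H rfl D hD hD1
    have hu0 : (0:ℝ) < u := by exact_mod_cast (by omega : 0 < u)
    have hlog : 0 < Real.log u := Real.log_pos (by exact_mod_cast (by omega : 1 < u))
    have hmarg : ∀ i, γ / 4 * K ≤ ∑ j, s j i := by
      intro i
      have b1 : Real.exp (-γ * ∑ j, s j i) ≤ Real.exp (Real.log u - K * (5 / 4 * γ ^ 2)) := by
        refine le_trans ?_ (hsw.trans ?_)
        · have := Finset.single_le_sum (f := fun i => (1:ℝ) * Real.exp (-γ * ∑ j, s j i))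
            (fun i _ => by positivity) (Finset.mem_univ i)
          simpa using this
        · rw [← Real.exp_nat_mul, sub_eq_add_neg, Real.exp_add, Real.exp_log hu0]
          simp
      have b2 := Real.exp_le_exp.1 b1
      have b3 : γ * (γ / 4 * K) ≤ γ * ∑ j, s j i := by nlinarith
      exact le_of_mul_le_mul_left b3 hγ
    have hK0 : 0 < K := by
      rcases Nat.eq_zero_or_pos K with h | h
      · subst h; simp at hK; linarith
      · exact h
    haveI : Nonempty (Fin K) := ⟨⟨0, hK0⟩⟩
    have hsum : ∑ j : Fin K, γ / 4 ≤ ∑ j : Fin K, ∑ i, D i * s j i := by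
      rw [Finset.sum_comm]
      calc ∑ j : Fin K, γ / 4 = ∑ i, D i * (γ / 4 * K) := by
            rw [← Finset.sum_mul, hD1]; simp; ring
        _ ≤ ∑ i, D i * ∑ j, s j i := by
            apply Finset.sum_le_sum; intro i _
            exact mul_le_mul_of_nonneg_left (hmarg i) (hD i)
        _ = _ := by simp [Finset.mul_sum]
    obtain ⟨j, _, hj⟩ := Finset.exists_le_of_sum_le Finset.univ_nonempty hsum
    refine ⟨s j, ?_, hj⟩
    rcases hs j with h | ⟨t, ht⟩
    · exact Or.inl h
    · right
      refine ⟨finProdFinEquiv (j, t), ?_⟩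
      rw [ht]
      ext i
      simp [e, Equiv.arrowCongr]
  · exact le_rfl

open scoped Classical in
/-- A random hypothesis set `H` consisting of `h₀` together with
`k·⌈N/k⌉` i.i.d. uniform vectors in `{-1,1}^u` is, with probability at least `1 - δ`,
a weak-learner hypothesis set: for every distribution `D` on `{1,…,u}` some `h ∈ H`
has advantage at least `γ/4` under `D`. -/
theorem adaboost_weak_learner_hypothesis_set :
    ∃ c0 c1 c2 : ℝ, 0 < c0 ∧ c0 ≤ 1 ∧ 0 < c1 ∧ c1 ≤ 1 ∧ 1 ≤ c2 ∧
      ∀ (u : ℕ), 2 ≤ u → ∀ r r1 α γ δ : ℝ,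
        0 ≤ r → 0 ≤ r1 → 1 ≤ α → r1 = α ^ 2 * r → r1 ≤ (u : ℝ) →
        0 < δ → δ ≤ 1 → 0 < γ → γ < 1 / 4 → γ ≤ c0 / (2 * α) →
        ∀ k N : ℝ, k = Real.log u * (γ ^ 2)⁻¹ →
          N = 2 * (c1 ^ 2)⁻¹ * k * Real.log (k / δ) * Real.exp (8 * c2 * γ ^ 2 * r1) →
        ∀ M : ℕ, M = ⌈k⌉₊ * ⌈N / k⌉₊ →
        ∀ h0 : Fin u → ℝ,
          h0 = (fun (i : Fin u) => if ((i : ℕ) + 1 : ℝ) ≤ (u : ℝ) - r1 then 1 else -1) →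
        ENNReal.ofReal (1 - δ) ≤
          (PMF.uniformOfFintype (Fin M → Fin u → Bool)).toMeasure
            {g | ∀ H : Set (Fin u → ℝ),
              H = insert h0 {f | ∃ t : Fin M, f = fun i => boolSign (g t i)} →
              ∀ D : Fin u → ℝ, (∀ i, 0 ≤ D i) → ∑ i, D i = 1 →
                ∃ f ∈ H, γ / 4 ≤ ∑ i, D i * f i} := by
  refine ⟨1 / 8, 1 / 200, 32, by norm_num, by norm_num, by norm_num, by norm_num, by norm_num, ?_⟩
  intro u hu r r1 α γ δ hr hr1 hα hrα hr1u hδ hδ1 hγ hγ4 hγα k N hk hN M hM h0 hh0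
  have hγ1 : γ ≤ 1 / 16 := by
    refine hγα.trans ?_
    rw [div_le_iff₀ (by linarith)]
    linarith
  subst hM
  have hu0 : (0:ℝ) < u := by exact_mod_cast (by omega : 0 < u)
  have hlog : 0.69 ≤ Real.log u := by
    have : Real.log 2 ≤ Real.log u := Real.log_le_log (by norm_num) (by exact_mod_cast hu)
    linarith [Real.log_two_gt_d9]
  have hk' : k * γ ^ 2 = Real.log u := by rw [hk]; field_simp
  have hk2 : 2 ≤ k := by
    by_contra hcon
    push Not at hcon
    nlinarith
  have hh : ∀ i, h0 i = 1 ∨ h0 i = -1 := by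
    intro i; rw [hh0]; dsimp only; split_ifs <;> simp
  have hS : ((Finset.univ.filter fun i => h0 i = -1).card : ℝ) ≤ r1 + 1 := by
    refine le_trans ?_ (Nat.ceil_lt_add_one hr1).le
    rw [← Finset.card_range ⌈r1⌉₊]
    norm_cast
    apply Finset.card_le_card_of_injOn (fun i : Fin u => u - 1 - (i : ℕ))
    · intro i hi
      simp only [Finset.coe_filter, Finset.mem_univ, true_and, Set.mem_setOf_eq, hh0] at hi
      simp only [Finset.coe_range, Set.mem_Iio]
      apply Nat.lt_ceil.2
      have hlt : ¬ ((i : ℕ) + 1 : ℝ) ≤ (u : ℝ) - r1 := by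
        intro hle; rw [if_pos hle] at hi; norm_num at hi
      push Not at hlt
      have h2 : (((u - 1 - (i : ℕ) : ℕ)) : ℝ) + ((i : ℕ) + 1) = u := by
        have := i.2
        exact_mod_cast (by omega : (u - 1 - (i : ℕ)) + ((i : ℕ) + 1) = u)
      linarith
    · intro i _ j _ hij
      have := i.2
      have := j.2
      dsimp only at hij
      ext; omega
  have F := final_count u ⌈k⌉₊ ⌈N / k⌉₊ hu h0 hh r1 γ hγ hγ1
    (by rw [← hk']; exact mul_le_mul_of_nonneg_right (Nat.le_ceil k) (by positivity)) hS
  have hq : ⌈k⌉₊ * Real.exp (-(Real.exp (-(256 * γ ^ 2 * r1)) / 40000 * ⌈N / k⌉₊)) ≤ δ := by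
    have hkpos : 0 < k := by linarith
    have q1 : 2 * Real.log (k / δ) ≤ Real.exp (-(256 * γ ^ 2 * r1)) / 40000 * ⌈N / k⌉₊ := by
      have e1 : 2 * Real.log (k / δ) = Real.exp (-(256 * γ ^ 2 * r1)) / 40000 * (N / k) := by
        rw [hN, Real.exp_neg]
        have e3 : (8 * 32 * γ ^ 2 * r1) = 256 * γ ^ 2 * r1 := by ring
        rw [e3]
        field_simp
        norm_num
      rw [e1]
      gcongr
      exact Nat.le_ceil _
    have q2 : Real.exp (-(Real.exp (-(256 * γ ^ 2 * r1)) / 40000 * ⌈N / k⌉₊)) ≤ (δ / k) ^ 2 := by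
      have e1 : (δ / k) ^ 2 = Real.exp (-(2 * Real.log (k / δ))) := by
        rw [Real.exp_neg, two_mul, Real.exp_add, Real.exp_log (by positivity)]
        field_simp
      rw [e1]
      apply Real.exp_le_exp.2
      linarith
    have q3 : (⌈k⌉₊ : ℝ) ≤ k + 1 := (Nat.ceil_lt_add_one hkpos.le).le
    calc _ ≤ (k + 1) * (δ / k) ^ 2 := by gcongr
      _ = ((k + 1) * δ * δ) / k ^ 2 := by ring
      _ ≤ δ := by
        rw [div_le_iff₀ (by positivity)]
        nlinarith [mul_nonneg hδ.le (sub_nonneg.2 hδ1), mul_pos hδ hkpos]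
  set A := {g : Fin (⌈k⌉₊ * ⌈N / k⌉₊) → Fin u → Bool | ∀ H : Set (Fin u → ℝ),
              H = insert h0 {f | ∃ t : Fin (⌈k⌉₊ * ⌈N / k⌉₊), f = fun i => boolSign (g t i)} →
              ∀ D : Fin u → ℝ, (∀ i, 0 ≤ D i) → ∑ i, D i = 1 →
                ∃ f ∈ H, γ / 4 ≤ ∑ i, D i * f i} with hA
  rw [PMF.toMeasure_uniformOfFintype_apply _ (Set.toFinite A).measurableSet]
  set T := Fintype.card (Fin (⌈k⌉₊ * ⌈N / k⌉₊) → Fin u → Bool) with hT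
  have hTpos : 0 < T := Fintype.card_pos
  have hTr : (0:ℝ) < T := by exact_mod_cast hTpos
  have hcount : (1 - δ) * T ≤ (Fintype.card A : ℝ) := by
    have e1 : (Fintype.card A : ℝ) = ∑ g, (if g ∈ A then (1:ℝ) else 0) := by
      rw [Finset.sum_boole, Fintype.card_subtype]
    have e2 : ∑ g, (if g ∈ A then (1:ℝ) else 0) + ∑ g, (if g ∈ A then (0:ℝ) else 1) = T := by
      rw [← Finset.sum_add_distrib]
      rw [Finset.sum_congr rfl (g := fun _ => (1:ℝ))
        (by intro g _; split_ifs <;> norm_num)]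
      simp [hT]
    have e3 : ∑ g, (if g ∈ A then (0:ℝ) else 1) ≤ δ * T :=
      F.trans (mul_le_mul_of_nonneg_right hq hTr.le)
    linarith
  rw [← ENNReal.ofReal_natCast, ← ENNReal.ofReal_natCast, ← ENNReal.ofReal_div_of_pos hTr]
  apply ENNReal.ofReal_le_ofReal
  rw [le_div_iff₀ hTr]
  convert hcount
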